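/- For every s₀ ∈ (0,1) there exists a constant C = C(s₀) > 0 such that for every s ∈ [s₀,1), every interval (a,b) ⊂ ℝ, and every measurable function u : (a,b) → ℝ² with finite Gagliardo seminorm of order (1+s)/2, the essential oscillation of u on (a,b) satisfies osc(u,(a,b))² ≤ C (b-a)^s (1-s) [u]²_{H^{(1+s)/2}((a,b))}. -/

import Mathlib

open MeasureTheory Set
open scoped ENNReal

/-!
Write `E K` for the double integral of `|u x - u y| ^ q * K |x - y|` over a convex set in dimension
`d`. Passing through the midpoint of `x` and `y`, convexity of `t ^ q` and the change of variables
`y ↦ (x + y) / 2` give `E K ≤ 2 ^ (q + d) * E (K (2 * ·))`. The kernel `t ^ (-p)` is homogeneous, so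
the truncation `t ^ (-p) - (2 * r) ^ (-p)` reproduces itself under `t ↦ 2 * t` up to a gain on
`{t ≤ r}`. With `p = 2 * d + s`, comparing the two facts bounds the integral of `|u x - u y| ^ q`
over `{|x - y| ≤ r}` by a multiple of `r ^ p * (1 - 2 ^ (s + d - q)) * E (t ^ (-p))`: the factor
vanishing as `s → q - d` is already there. The averages of `u` over a sequence of balls obtained by
repeatedly halving towards `x` then differ by a geometric sequence and converge to `u x` for almost
every `x`.
-/

open Filter Metric Module Topology

section Powers

lemma two_mul_rpow (t : ℝ≥0∞) (z : ℝ) : (2 * t) ^ z = 2 ^ z * t ^ z := by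
  simp [ENNReal.mul_rpow_eq_ite]

lemma one_sub_two_rpow_neg_ne_zero {z : ℝ} (hz : 0 < z) : 1 - (2 : ℝ≥0∞) ^ (-z) ≠ 0 :=
  (tsub_pos_of_lt
    (ENNReal.rpow_lt_one_of_one_lt_of_neg ENNReal.one_lt_two (neg_lt_zero.2 hz))).ne'

lemma one_sub_two_rpow_neg_le (x : ℝ) : 1 - (2 : ℝ≥0∞) ^ (-x) ≤ ENNReal.ofReal x := by
  have log_two_le : Real.log 2 ≤ 1 := by linarith [Real.log_two_lt_d9]
  have real_bound : 1 - (2 : ℝ) ^ (-x) ≤ max x 0 := by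
    rcases le_or_gt x 0 with hx | hx
    · exact (sub_nonpos.2 (Real.one_le_rpow one_le_two (neg_nonneg.2 hx))).trans (le_max_right _ _)
    · have := Real.add_one_le_exp (Real.log 2 * -x)
      rw [← Real.rpow_def_of_pos two_pos] at this
      exact le_max_of_le_left (by nlinarith)
  rw [← ENNReal.ofReal_ofNat, ENNReal.ofReal_rpow_of_pos two_pos, ← ENNReal.ofReal_one,
    ← ENNReal.ofReal_sub _ (by positivity)]
  exact (ENNReal.ofReal_le_ofReal real_bound).trans (by simp)

end Powers

section Energy

/-- The energy of `u` for the exponent `q` and a kernel `K` of the distance. The `q`-th power of a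
Gagliardo seminorm is the case of a kernel `t ^ (-p)`; this kernel is `⊤` at `t = 0`, which does not
matter because `0 * ⊤ = 0`. -/
noncomputable def nonlocalEnergy {X E : Type*} [PseudoEMetricSpace X] [MeasurableSpace X]
    [PseudoEMetricSpace E] (μ : Measure X) (q : ℝ) (K : ℝ≥0∞ → ℝ≥0∞) (u : X → E) : ℝ≥0∞ :=
  ∫⁻ x, ∫⁻ y, edist (u x) (u y) ^ q * K (edist x y) ∂μ ∂μ

namespace nonlocalEnergy

variable {X E : Type*} [PseudoEMetricSpace X] [MeasurableSpace X] [PseudoEMetricSpace E]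
  {μ : Measure X} {q : ℝ} {K L : ℝ≥0∞ → ℝ≥0∞} {u : X → E}

lemma mono (h : ∀ t, K t ≤ L t) : nonlocalEnergy μ q K u ≤ nonlocalEnergy μ q L u :=
  lintegral_mono fun _ => lintegral_mono fun _ => mul_le_mul_right (h _) _

lemma const_mul_le (c : ℝ≥0∞) :
    c * nonlocalEnergy μ q K u ≤ nonlocalEnergy μ q (fun t => c * K t) u := by
  refine (lintegral_const_mul_le _ _).trans <| lintegral_mono fun x =>
    (lintegral_const_mul_le _ _).trans_eq ?_
  simp only [mul_left_comm c]

lemma add_le :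
    nonlocalEnergy μ q K u + nonlocalEnergy μ q L u ≤
      nonlocalEnergy μ q (fun t => K t + L t) u := by
  refine (le_lintegral_add _ _).trans <| lintegral_mono fun x =>
    (le_lintegral_add _ _).trans_eq ?_
  simp only [mul_add]

lemma lintegral_lintegral_le_indicator_Iic {S A B : Set X} {ρ : ℝ≥0∞} (hAm : MeasurableSet A)
    (hBm : MeasurableSet B) (hA : A ⊆ S) (hB : B ⊆ S) (hρ : ∀ x ∈ A, ∀ y ∈ B, edist x y ≤ ρ) :
    ∫⁻ x in A, ∫⁻ y in B, edist (u x) (u y) ^ q ∂μ ∂μ ≤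
      nonlocalEnergy (μ.restrict S) q ((Iic ρ).indicator 1) u := by
  calc ∫⁻ x in A, ∫⁻ y in B, edist (u x) (u y) ^ q ∂μ ∂μ
      = ∫⁻ x in A, ∫⁻ y in B,
          edist (u x) (u y) ^ q * (Iic ρ).indicator 1 (edist x y) ∂μ ∂μ :=
        setLIntegral_congr_fun hAm fun x hx => setLIntegral_congr_fun hBm fun y hy => by
          simp only [indicator_of_mem (mem_Iic.2 (hρ x hx y hy)), Pi.one_apply, mul_one]
    _ ≤ nonlocalEnergy (μ.restrict S) q ((Iic ρ).indicator 1) u :=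
        (lintegral_mono_set hA).trans (lintegral_mono fun _ => lintegral_mono_set hB)

end nonlocalEnergy

lemma nonlocalEnergy.lintegral_ofReal_norm_sub_rpow_div {V E : Type*} [NormedAddCommGroup V]
    [MeasurableSpace V] [NormedAddCommGroup E] (μ : Measure V) {q : ℝ} (hq : 0 < q) (p : ℝ)
    (u : V → E) :
    ∫⁻ x, ∫⁻ y, ENNReal.ofReal (‖u x - u y‖ ^ q / ‖x - y‖ ^ p) ∂μ ∂μ =
      nonlocalEnergy μ q (· ^ (-p)) u := by
  refine lintegral_congr fun x => lintegral_congr fun y => ?_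
  rcases eq_or_ne x y with rfl | hxy
  · simp [hq, hq.ne']
  · have norm_pos : 0 < ‖x - y‖ := norm_sub_pos_iff.2 hxy
    rw [ENNReal.ofReal_div_of_pos (by positivity), ← ENNReal.ofReal_rpow_of_pos norm_pos,
      ← ENNReal.ofReal_rpow_of_nonneg (norm_nonneg _) hq.le, ofReal_norm, ofReal_norm,
      ← edist_eq_enorm_sub, ← edist_eq_enorm_sub, div_eq_mul_inv, ← ENNReal.rpow_neg]

end Energy

section Midpoint

variable {V E : Type*} [NormedAddCommGroup V] [NormedSpace ℝ V]

lemma two_mul_edist_midpoint (x y : V) : 2 * edist x (midpoint ℝ x y) = edist x y := by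
  rw [edist_nndist, nndist_left_midpoint, edist_nndist]
  norm_cast
  rw [← mul_assoc]
  simp

lemma edist_rpow_le_midpoint [PseudoEMetricSpace E] {q : ℝ} (hq : 1 ≤ q)
    (u : V → E) (K : ℝ≥0∞ → ℝ≥0∞) (x y : V) :
    edist (u x) (u y) ^ q * K (edist x y) ≤ 2 ^ (q - 1) *
      (edist (u x) (u (midpoint ℝ x y)) ^ q * K (2 * edist x (midpoint ℝ x y)) +
        edist (u y) (u (midpoint ℝ y x)) ^ q * K (2 * edist y (midpoint ℝ y x))) := by
  rw [two_mul_edist_midpoint, two_mul_edist_midpoint, midpoint_comm (R := ℝ) y x,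
    edist_comm y x, ← add_mul, ← mul_assoc]
  gcongr
  refine le_trans ?_ (ENNReal.rpow_add_le_mul_rpow_add_rpow _ _ hq)
  gcongr
  exact edist_triangle_right _ _ _

variable [FiniteDimensional ℝ V]
  [MeasurableSpace V] [BorelSpace V] {μ : Measure V} [μ.IsAddHaarMeasure]

variable (μ) in
lemma map_midpoint_addHaar (x : V) :
    μ.map (midpoint ℝ x) = (2 : ℝ≥0∞) ^ finrank ℝ V • μ := by
  have midpoint_eq : midpoint ℝ x = (fun y => (2⁻¹ : ℝ) • x + y) ∘ ((2⁻¹ : ℝ) • ·) := by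
    ext y
    simp only [midpoint_eq_smul_add, Function.comp_apply, smul_add, invOf_eq_inv]
  rw [midpoint_eq, ← Measure.map_map (by fun_prop) (by fun_prop),
    Measure.map_addHaar_smul μ (by norm_num), Measure.map_smul, map_add_left_eq_self,
    inv_pow, inv_inv, abs_of_pos (by positivity), ENNReal.ofReal_pow zero_le_two,
    ENNReal.ofReal_ofNat]

lemma setLIntegral_comp_midpoint_le {S : Set V} (hS : Convex ℝ S) (hSm : MeasurableSet S)
    {x : V} (hx : x ∈ S) {F : V → ℝ≥0∞} (hF : Measurable F) :
    ∫⁻ y in S, F (midpoint ℝ x y) ∂μ ≤ 2 ^ finrank ℝ V * ∫⁻ z in S, F z ∂μ := by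
  have midpoint_meas : Measurable (midpoint ℝ x) := by
    simp only [funext (midpoint_eq_smul_add ℝ x)]
    fun_prop
  calc ∫⁻ y in S, F (midpoint ℝ x y) ∂μ
      ≤ ∫⁻ y in midpoint ℝ x ⁻¹' S, F (midpoint ℝ x y) ∂μ :=
        lintegral_mono_set fun _ hy => hS.midpoint_mem hx hy
    _ = ∫⁻ z in S, F z ∂μ.map (midpoint ℝ x) := (setLIntegral_map hSm hF midpoint_meas).symm
    _ = 2 ^ finrank ℝ V * ∫⁻ z in S, F z ∂μ := by
        rw [map_midpoint_addHaar, setLIntegral_smul_measure, smul_eq_mul]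

lemma lintegral_lintegral_comp_midpoint_le {S : Set V} (hS : Convex ℝ S) (hSm : MeasurableSet S)
    {F : V → V → ℝ≥0∞} (hF : Measurable (Function.uncurry F)) :
    ∫⁻ x in S, ∫⁻ y in S, F x (midpoint ℝ x y) ∂μ ∂μ
      ≤ 2 ^ finrank ℝ V * ∫⁻ x in S, ∫⁻ y in S, F x y ∂μ ∂μ := by
  rw [← lintegral_const_mul' _ _ (by finiteness)]
  exact setLIntegral_mono' hSm fun x hx =>
    setLIntegral_comp_midpoint_le hS hSm hx hF.of_uncurry_left

theorem nonlocalEnergy.le_comp_two_mul [PseudoEMetricSpace E] {S : Set V} (hS : Convex ℝ S)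
    (hSm : MeasurableSet S) {q : ℝ} (hq : 1 ≤ q) {K : ℝ≥0∞ → ℝ≥0∞} (hK : Measurable K)
    {u : V → E} (hu : StronglyMeasurable u) :
    nonlocalEnergy (μ.restrict S) q K u ≤
      2 ^ (q + finrank ℝ V) * nonlocalEnergy (μ.restrict S) q (fun t => K (2 * t)) u := by
  set F : V → V → ℝ≥0∞ := fun x z => edist (u x) (u z) ^ q * K (2 * edist x z) with hF_def
  have hF : Measurable (Function.uncurry F) := by
    have hdist : Measurable fun z : V × V => edist (u z.1) (u z.2) :=
      ((hu.comp_measurable measurable_fst).edist (hu.comp_measurable measurable_snd)).measurable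
    simp only [hF_def, Function.uncurry_def]
    fun_prop
  have hFmid : Measurable fun z : V × V => F z.1 (midpoint ℝ z.1 z.2) := by
    have : Measurable fun z : V × V => (z.1, midpoint ℝ z.1 z.2) := by
      simp only [midpoint_eq_smul_add]
      fun_prop
    exact hF.comp this
  have swap : ∫⁻ x in S, ∫⁻ y in S, F y (midpoint ℝ y x) ∂μ ∂μ =
      ∫⁻ x in S, ∫⁻ y in S, F x (midpoint ℝ x y) ∂μ ∂μ :=
    lintegral_lintegral_swap (hFmid.comp measurable_swap).aemeasurable
  calc nonlocalEnergy (μ.restrict S) q K u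
      ≤ ∫⁻ x in S, ∫⁻ y in S, 2 ^ (q - 1) *
          (F x (midpoint ℝ x y) + F y (midpoint ℝ y x)) ∂μ ∂μ :=
        lintegral_mono fun x => lintegral_mono fun y => edist_rpow_le_midpoint hq u K x y
    _ = 2 ^ (q - 1) * (2 * ∫⁻ x in S, ∫⁻ y in S, F x (midpoint ℝ x y) ∂μ ∂μ) := by
        have hFmid_x (x : V) : Measurable fun y => F x (midpoint ℝ x y) :=
          hFmid.comp measurable_prodMk_left
        have two_rpow_ne_top : (2 : ℝ≥0∞) ^ (q - 1) ≠ ⊤ := by finiteness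
        simp only [lintegral_const_mul' _ _ two_rpow_ne_top, lintegral_add_left (hFmid_x _)]
        rw [lintegral_add_left hFmid.lintegral_prod_right', swap, two_mul]
    _ ≤ 2 ^ (q - 1) * (2 * (2 ^ finrank ℝ V * ∫⁻ x in S, ∫⁻ y in S, F x y ∂μ ∂μ)) := by
        gcongr
        exact lintegral_lintegral_comp_midpoint_le hS hSm hF
    _ = 2 ^ (q + finrank ℝ V) * nonlocalEnergy (μ.restrict S) q (fun t => K (2 * t)) u := by
        have exponent : q + finrank ℝ V = q - 1 + 1 + finrank ℝ V := by ring
        rw [exponent, ENNReal.rpow_add _ _ two_ne_zero ENNReal.ofNat_ne_top,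
          ENNReal.rpow_add _ _ two_ne_zero ENNReal.ofNat_ne_top, ENNReal.rpow_one,
          ENNReal.rpow_natCast, mul_assoc, mul_assoc, nonlocalEnergy]

end Midpoint

section Truncation

/-- The positive part of `t ^ (-p) - (2 * r) ^ (-p)`, given by truncated subtraction; it vanishes
for `2 * r ≤ t` when `0 ≤ p`. -/
noncomputable def truncatedKernel (p : ℝ) (r t : ℝ≥0∞) : ℝ≥0∞ := t ^ (-p) - (2 * r) ^ (-p)

lemma measurable_truncatedKernel (p : ℝ) (r : ℝ≥0∞) : Measurable (truncatedKernel p r) := by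
  unfold truncatedKernel
  fun_prop

lemma truncatedKernel_two_mul_add_indicator_le {p : ℝ} (hp : 0 ≤ p) (r t : ℝ≥0∞) :
    2 ^ p * truncatedKernel p r (2 * t)
        + (r ^ (-p) - (2 * r) ^ (-p)) * (Iic r).indicator 1 t ≤ truncatedKernel p r t := by
  have two_rpow_cancel : (2 : ℝ≥0∞) ^ p * 2 ^ (-p) = 1 := by
    rw [← ENNReal.rpow_add _ _ two_ne_zero ENNReal.ofNat_ne_top, add_neg_cancel, ENNReal.rpow_zero]
  have rescale : 2 ^ p * truncatedKernel p r (2 * t) = t ^ (-p) - r ^ (-p) := by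
    rw [truncatedKernel, two_mul_rpow, two_mul_rpow, ENNReal.mul_sub fun _ _ => by finiteness,
      ← mul_assoc, ← mul_assoc, two_rpow_cancel, one_mul, one_mul]
  have antitone_rpow {a b : ℝ≥0∞} (hab : a ≤ b) : b ^ (-p) ≤ a ^ (-p) := by
    simpa only [ENNReal.rpow_neg, ENNReal.inv_le_inv] using ENNReal.rpow_le_rpow hab hp
  have hr : (2 * r) ^ (-p) ≤ r ^ (-p) := antitone_rpow (le_mul_of_one_le_left' one_le_two)
  rw [rescale, truncatedKernel]
  by_cases ht : t ∈ Iic r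
  · rw [indicator_of_mem ht, Pi.one_apply, mul_one, tsub_add_tsub_cancel (antitone_rpow ht) hr]
  · rw [indicator_of_notMem ht, mul_zero, add_zero]
    exact tsub_le_tsub_left hr _

namespace nonlocalEnergy

variable {V E : Type*} [NormedAddCommGroup V] [NormedSpace ℝ V] [FiniteDimensional ℝ V]
  [MeasurableSpace V] [BorelSpace V] {μ : Measure V} [μ.IsAddHaarMeasure]
  {p q : ℝ} {u : V → E}

theorem sub_mul_indicator_Iic_le [PseudoEMetricSpace E] {S : Set V} (hS : Convex ℝ S)
    (hSm : MeasurableSet S) (hq : 1 ≤ q) (hp : 0 ≤ p) (hu : StronglyMeasurable u)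
    (hfin : nonlocalEnergy (μ.restrict S) q (· ^ (-p)) u ≠ ⊤) (r : ℝ≥0∞) :
    (r ^ (-p) - (2 * r) ^ (-p)) * nonlocalEnergy (μ.restrict S) q ((Iic r).indicator 1) u ≤
      (1 - 2 ^ (p - q - finrank ℝ V)) * nonlocalEnergy (μ.restrict S) q (· ^ (-p)) u := by
  set T := nonlocalEnergy (μ.restrict S) q (truncatedKernel p r) u
  set T₂ := nonlocalEnergy (μ.restrict S) q (fun t => truncatedKernel p r (2 * t)) u
  have T_le : T ≤ nonlocalEnergy (μ.restrict S) q (· ^ (-p)) u := mono fun _ => tsub_le_self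
  have T_fin : T ≠ ⊤ := ne_top_of_le_ne_top hfin T_le
  have le_T₂ : 2 ^ (p - q - finrank ℝ V) * T ≤ 2 ^ p * T₂ := by
    calc 2 ^ (p - q - finrank ℝ V) * T
        ≤ 2 ^ (p - q - finrank ℝ V) * (2 ^ (q + finrank ℝ V) * T₂) := by
          gcongr
          exact le_comp_two_mul hS hSm hq (measurable_truncatedKernel p r) hu
      _ = 2 ^ p * T₂ := by
          rw [← mul_assoc, ← ENNReal.rpow_add _ _ two_ne_zero ENNReal.ofNat_ne_top]
          ring_nf
  have split : (r ^ (-p) - (2 * r) ^ (-p)) *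
      nonlocalEnergy (μ.restrict S) q ((Iic r).indicator 1) u + 2 ^ p * T₂ ≤ T := by
    rw [add_comm]
    calc _ ≤ _ := add_le_add (const_mul_le _) (const_mul_le _)
      _ ≤ _ := add_le
      _ ≤ T := mono (truncatedKernel_two_mul_add_indicator_le hp r)
  calc _ ≤ T - 2 ^ (p - q - finrank ℝ V) * T :=
        ENNReal.le_sub_of_add_le_right (by finiteness) ((add_le_add_right le_T₂ _).trans split)
    _ = (1 - 2 ^ (p - q - finrank ℝ V)) * T := by
        rw [ENNReal.sub_mul fun _ _ => T_fin, one_mul]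
    _ ≤ _ := by gcongr

lemma one_sub_mul_indicator_Iic_le_rpow [PseudoEMetricSpace E] {S : Set V} (hS : Convex ℝ S)
    (hSm : MeasurableSet S) (hq : 1 ≤ q) (hp : 0 ≤ p) (hu : StronglyMeasurable u)
    (hfin : nonlocalEnergy (μ.restrict S) q (· ^ (-p)) u ≠ ⊤)
    {r : ℝ≥0∞} (hr_zero : r ≠ 0) (hr_top : r ≠ ⊤) :
    (1 - 2 ^ (-p)) * nonlocalEnergy (μ.restrict S) q ((Iic r).indicator 1) u ≤
      r ^ p * ((1 - 2 ^ (p - q - finrank ℝ V)) * nonlocalEnergy (μ.restrict S) q (· ^ (-p)) u) := by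
  have key := sub_mul_indicator_Iic_le hS hSm hq hp hu hfin r
  have rpow_sub : r ^ (-p) - (2 * r) ^ (-p) = (1 - 2 ^ (-p)) * r ^ (-p) := by
    rw [two_mul_rpow, ENNReal.sub_mul fun _ _ => by finiteness, one_mul]
  rw [rpow_sub] at key
  calc _ = r ^ p * ((1 - 2 ^ (-p)) * r ^ (-p) *
        nonlocalEnergy (μ.restrict S) q ((Iic r).indicator 1) u) := by
        have : r ^ p * r ^ (-p) = 1 := by
          rw [← ENNReal.rpow_add _ _ hr_zero hr_top, add_neg_cancel, ENNReal.rpow_zero]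
        rw [mul_right_comm, mul_left_comm, this, mul_one]
    _ ≤ _ := by gcongr

lemma one_sub_mul_indicator_Iic_le_pow_mul_rpow [PseudoEMetricSpace E] {S : Set V} {s : ℝ}
    (hS : Convex ℝ S) (hSm : MeasurableSet S) (hq : 1 ≤ q) (hs : 0 ≤ s) (hu : StronglyMeasurable u)
    (hfin : nonlocalEnergy (μ.restrict S) q (· ^ (-(2 * finrank ℝ V + s))) u ≠ ⊤)
    {r : ℝ≥0∞} (hr_zero : r ≠ 0) (hr_top : r ≠ ⊤) :
    (1 - 2 ^ (-s)) * nonlocalEnergy (μ.restrict S) q ((Iic r).indicator 1) u ≤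
      r ^ (2 * finrank ℝ V) * (r ^ s * ((1 - 2 ^ (s + finrank ℝ V - q)) *
        nonlocalEnergy (μ.restrict S) q (· ^ (-(2 * finrank ℝ V + s))) u)) := by
  have hp : 0 ≤ 2 * finrank ℝ V + s := by positivity
  have exponent : 2 * finrank ℝ V + s - q - finrank ℝ V = s + finrank ℝ V - q := by ring
  have rpow_split : r ^ (2 * finrank ℝ V + s) = r ^ (2 * finrank ℝ V) * r ^ s := by
    rw [ENNReal.rpow_add _ _ hr_zero hr_top, ← ENNReal.rpow_natCast]
    push_cast
    rfl
  calc _ ≤ (1 - 2 ^ (-(2 * finrank ℝ V + s))) *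
          nonlocalEnergy (μ.restrict S) q ((Iic r).indicator 1) u := by
        gcongr
        · exact one_le_two
        · exact le_add_of_nonneg_left (by positivity)
    _ ≤ _ := one_sub_mul_indicator_Iic_le_rpow hS hSm hq hp hu hfin hr_zero hr_top
    _ = _ := by rw [exponent, rpow_split, mul_assoc]

end nonlocalEnergy

end Truncation

section Average

variable {α β E : Type*} [MeasurableSpace α] [MeasurableSpace β] [NormedAddCommGroup E]
  {μ : Measure α} {ν : Measure β} [IsFiniteMeasure μ] [IsFiniteMeasure ν]
  {q : ℝ} {u : α → E} {v : β → E}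

lemma integrable_of_lintegral_enorm_rpow_ne_top (hq : 1 ≤ q) (hu : AEStronglyMeasurable u μ)
    (hfin : ∫⁻ x, ‖u x‖ₑ ^ q ∂μ ≠ ⊤) : Integrable u μ := by
  have hq_pos : 0 < q := zero_lt_one.trans_le hq
  have memLp : MemLp u (ENNReal.ofReal q) μ := by
    refine ⟨hu, ?_⟩
    rw [eLpNorm_lt_top_iff_lintegral_rpow_enorm_lt_top (by simpa using hq_pos) (by finiteness),
      ENNReal.toReal_ofReal hq_pos.le]
    exact hfin.lt_top
  exact memLp.integrable (by simpa using hq)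

lemma integrable_of_lintegral_edist_rpow_ne_top (hq : 1 ≤ q) (hu : AEStronglyMeasurable u μ)
    {c : E} (hfin : ∫⁻ x, edist c (u x) ^ q ∂μ ≠ ⊤) : Integrable u μ := by
  simp only [edist_eq_enorm_sub] at hfin
  have := integrable_of_lintegral_enorm_rpow_ne_top hq (aestronglyMeasurable_const.sub hu) hfin
  simpa only [Pi.sub_apply, sub_sub_cancel] using (integrable_const c).sub' this

lemma integrable_of_lintegral_lintegral_edist_rpow_ne_top (hq : 1 ≤ q)
    (hu : AEStronglyMeasurable u μ) (hfin : ∫⁻ x, ∫⁻ y, edist (u x) (u y) ^ q ∂μ ∂μ ≠ ⊤) :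
    Integrable u μ := by
  rcases eq_zero_or_neZero μ with rfl | _
  · exact integrable_zero_measure
  by_contra hu_int
  have inner_top (x : α) : ∫⁻ y, edist (u x) (u y) ^ q ∂μ = ⊤ :=
    not_ne_iff.1 fun h => hu_int (integrable_of_lintegral_edist_rpow_ne_top hq hu h)
  exact hfin (by simp [inner_top, NeZero.ne])

variable [NormedSpace ℝ E]

lemma enorm_average_rpow_mul_measure_univ_le (hq : 1 ≤ q) (hu : AEStronglyMeasurable u μ) :
    ‖⨍ x, u x ∂μ‖ₑ ^ q * μ univ ≤ ∫⁻ x, ‖u x‖ₑ ^ q ∂μ := by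
  rcases eq_zero_or_neZero μ with rfl | _
  · simp
  have hq_pos : 0 < q := zero_lt_one.trans_le hq
  have jensen : ‖⨍ x, u x ∂μ‖ₑ ≤ (⨍⁻ x, ‖u x‖ₑ ^ q ∂μ) ^ q⁻¹ := by
    calc ‖⨍ x, u x ∂μ‖ₑ ≤ ⨍⁻ x, ‖u x‖ₑ ∂μ := enorm_integral_le_lintegral_enorm _
      _ = eLpNorm' u 1 ((μ univ)⁻¹ • μ) := by simp [eLpNorm', laverage_eq']
      _ ≤ eLpNorm' u q ((μ univ)⁻¹ • μ) :=
        eLpNorm'_le_eLpNorm'_of_exponent_le zero_lt_one hq _ (hu.smul_measure _)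
      _ = (⨍⁻ x, ‖u x‖ₑ ^ q ∂μ) ^ q⁻¹ := by rw [eLpNorm', laverage_eq', one_div]
  rw [← laverage_mul_measure_univ]
  gcongr
  exact (ENNReal.le_rpow_inv_iff hq_pos).1 jensen

variable [CompleteSpace E]

lemma edist_average_rpow_mul_measure_univ_le (hq : 1 ≤ q) (hu : AEStronglyMeasurable u μ) (c : E) :
    edist c (⨍ x, u x ∂μ) ^ q * μ univ ≤ ∫⁻ x, edist c (u x) ^ q ∂μ := by
  rcases eq_zero_or_neZero μ with rfl | _
  · simp
  by_cases hfin : ∫⁻ x, edist c (u x) ^ q ∂μ = ⊤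
  · exact hfin ▸ le_top
  have hu_int : Integrable u μ := integrable_of_lintegral_edist_rpow_ne_top hq hu hfin
  have average_sub : ⨍ x, (c - u x) ∂μ = c - ⨍ x, u x ∂μ := by
    rw [average, integral_sub (integrable_const c) hu_int.to_average]
    simp [average]
  simpa only [edist_eq_enorm_sub, average_sub] using
    enorm_average_rpow_mul_measure_univ_le (u := fun x => c - u x) hq
      (aestronglyMeasurable_const.sub hu)

lemma edist_average_average_rpow_mul_le (hq : 1 ≤ q) (hu : AEStronglyMeasurable u μ)
    (hv : AEStronglyMeasurable v ν) :
    edist (⨍ x, u x ∂μ) (⨍ y, v y ∂ν) ^ q * (μ univ * ν univ) ≤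
      ∫⁻ x, ∫⁻ y, edist (u x) (v y) ^ q ∂ν ∂μ := by
  calc edist (⨍ x, u x ∂μ) (⨍ y, v y ∂ν) ^ q * (μ univ * ν univ)
      = edist (⨍ y, v y ∂ν) (⨍ x, u x ∂μ) ^ q * μ univ * ν univ := by rw [edist_comm, mul_assoc]
    _ ≤ (∫⁻ x, edist (⨍ y, v y ∂ν) (u x) ^ q ∂μ) * ν univ := by
      gcongr
      exact edist_average_rpow_mul_measure_univ_le hq hu _
    _ = ∫⁻ x, edist (u x) (⨍ y, v y ∂ν) ^ q * ν univ ∂μ := by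
      simp only [lintegral_mul_const' _ _ (measure_ne_top ν univ), edist_comm]
    _ ≤ ∫⁻ x, ∫⁻ y, edist (u x) (v y) ^ q ∂ν ∂μ :=
      lintegral_mono fun x => edist_average_rpow_mul_measure_univ_le hq hv (u x)

end Average

section HomotheticBall

variable {V : Type*} [NormedAddCommGroup V] [NormedSpace ℝ V]

/-- The image of `closedBall c R` under the homothety with center `x` and ratio `(1 / 2) ^ k`. For
`x ∈ closedBall c R` these balls decrease to `x` and never leave `closedBall c R`, so that averages
over them connect the average over the whole ball to the value at `x`, including for `x` close to
the boundary. -/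
def halvedBall (c x : V) (R : ℝ) (k : ℕ) : Set V :=
  closedBall (AffineMap.lineMap x c ((1 / 2 : ℝ) ^ k)) ((1 / 2) ^ k * R)

variable {c x : V} {R : ℝ}

lemma halvedBall_zero : halvedBall c x R 0 = closedBall c R := by
  simp [halvedBall]

lemma mem_halvedBall (hx : x ∈ closedBall c R) (k : ℕ) : x ∈ halvedBall c x R k := by
  rw [halvedBall, mem_closedBall, dist_left_lineMap, Real.norm_of_nonneg (by positivity)]
  gcongr
  exact hx

lemma halvedBall_antitone (hx : x ∈ closedBall c R) : Antitone (halvedBall c x R) := by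
  refine antitone_nat_of_succ_le fun k => closedBall_subset_closedBall' ?_
  have center_dist : dist (AffineMap.lineMap x c ((1 / 2 : ℝ) ^ (k + 1)))
      (AffineMap.lineMap x c ((1 / 2 : ℝ) ^ k)) = (1 / 2) ^ (k + 1) * dist x c := by
    rw [dist_lineMap_lineMap, dist_comm, Real.dist_eq, pow_succ,
      ← mul_one_sub, abs_of_nonneg (by positivity)]
    norm_num
  rw [center_dist, pow_succ]
  have := mul_le_mul_of_nonneg_left hx (by positivity : (0 : ℝ) ≤ (1 / 2) ^ k)
  linarith

variable [FiniteDimensional ℝ V] [MeasurableSpace V] [BorelSpace V]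
  {E : Type*} [NormedAddCommGroup E] [NormedSpace ℝ E] [CompleteSpace E]
  {μ : Measure V} [μ.IsAddHaarMeasure]

lemma ae_tendsto_average_halvedBall {u : V → E} (hR : 0 < R)
    (hu : IntegrableOn u (closedBall c R) μ) :
    ∀ᵐ x ∂μ.restrict (closedBall c R),
      Tendsto (fun k => ⨍ y in halvedBall c x R k, u y ∂μ) atTop (𝓝 (u x)) := by
  have locallyIntegrable : LocallyIntegrable ((closedBall c R).indicator u) μ :=
    (hu.integrable_indicator measurableSet_closedBall).locallyIntegrable
  have radius_tendsto : Tendsto (fun k : ℕ => (1 / 2 : ℝ) ^ k * R) atTop (𝓝[>] 0) := by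
    refine tendsto_nhdsWithin_iff.2 ⟨?_, .of_forall fun k => by simpa using hR⟩
    simpa using (tendsto_pow_atTop_nhds_zero_of_lt_one (r := (1 / 2 : ℝ)) (by norm_num)
      (by norm_num)).mul_const R
  filter_upwards [ae_restrict_mem measurableSet_closedBall, ae_restrict_of_ae
    (IsUnifLocDoublingMeasure.ae_tendsto_average μ locallyIntegrable 1)] with x hx hlim
  have tendsto_indicator := hlim _ _ radius_tendsto
    (.of_forall fun k => by rw [one_mul]; exact mem_halvedBall hx k)
  rw [indicator_of_mem hx] at tendsto_indicator
  refine tendsto_indicator.congr fun k => ?_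
  have subset : halvedBall c x R k ⊆ closedBall c R :=
    halvedBall_zero (c := c) ▸ halvedBall_antitone hx k.zero_le
  exact setAverage_congr_fun measurableSet_closedBall
    (.of_forall fun y hy => indicator_of_mem (subset hy) u)

end HomotheticBall

section EssSup

lemma essSup_rpow_le_of_ae_rpow_le {α : Type*} [MeasurableSpace α] {μ : Measure α} [NeZero μ]
    {f : α → ℝ} (hf : ∀ x, 0 ≤ f x) {q T : ℝ} (hq : 0 < q) (h : ∀ᵐ x ∂μ, f x ^ q ≤ T) :
    essSup f μ ^ q ≤ T := by
  obtain ⟨x₀, hx₀⟩ := h.exists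
  have hT : 0 ≤ T := (Real.rpow_nonneg (hf x₀) q).trans hx₀
  have bound : ∀ᵐ x ∂μ, f x ≤ T ^ q⁻¹ :=
    h.mono fun x hx => (Real.le_rpow_inv_iff_of_pos (hf x) hT hq).2 hx
  have essSup_nonneg : 0 ≤ essSup f μ :=
    le_limsup_of_le ⟨_, bound⟩ fun b hb => (hb.exists.elim fun x hx => (hf x).trans hx)
  have essSup_le : essSup f μ ≤ T ^ q⁻¹ :=
    limsup_le_of_le (isCoboundedUnder_le_of_le _ hf) bound
  exact (Real.le_rpow_inv_iff_of_pos essSup_nonneg hT hq).1 essSup_le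

end EssSup

section Oscillation

open nonlocalEnergy

variable {V E : Type*} [NormedAddCommGroup V] [NormedSpace ℝ V] [FiniteDimensional ℝ V]
  [MeasurableSpace V] [BorelSpace V] {μ : Measure V} [μ.IsAddHaarMeasure]
  [NormedAddCommGroup E] {q s : ℝ} {u : V → E}

lemma edist_le_ofReal_two_mul {X : Type*} [PseudoMetricSpace X] {c x y : X} {r : ℝ}
    (hx : x ∈ closedBall c r) (hy : y ∈ closedBall c r) :
    edist x y ≤ ENNReal.ofReal (2 * r) := by
  rw [edist_dist, two_mul]
  exact ENNReal.ofReal_le_ofReal ((dist_triangle_right x y c).trans (add_le_add hx hy))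

lemma integrableOn_closedBall_of_nonlocalEnergy_ne_top {c : V} {R p : ℝ} (hR : 0 < R)
    (hq : 1 ≤ q) (hp : 0 < p) (hu : StronglyMeasurable u)
    (hfin : nonlocalEnergy (μ.restrict (closedBall c R)) q (· ^ (-p)) u ≠ ⊤) :
    IntegrableOn u (closedBall c R) μ := by
  have diam_ne_zero : ENNReal.ofReal (2 * R) ≠ 0 := by simpa using hR
  have near_ne_top : nonlocalEnergy (μ.restrict (closedBall c R)) q
      ((Iic (ENNReal.ofReal (2 * R))).indicator 1) u ≠ ⊤ := by
    intro h
    have := one_sub_mul_indicator_Iic_le_rpow (convex_closedBall c R) measurableSet_closedBall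
      hq hp.le hu hfin diam_ne_zero ENNReal.ofReal_ne_top
    rw [h, ENNReal.mul_top (one_sub_two_rpow_neg_ne_zero hp)] at this
    exact absurd (top_le_iff.1 this) (by finiteness)
  have : IsFiniteMeasure (μ.restrict (closedBall c R)) :=
    isFiniteMeasure_restrict.2 measure_closedBall_lt_top.ne
  refine integrable_of_lintegral_lintegral_edist_rpow_ne_top hq hu.aestronglyMeasurable
    (ne_top_of_le_ne_top near_ne_top ?_)
  exact lintegral_lintegral_le_indicator_Iic measurableSet_closedBall measurableSet_closedBall
    subset_rfl subset_rfl fun x hx y hy => edist_le_ofReal_two_mul hx hy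

variable (μ) in
lemma addHaar_closedBall_mul_closedBall_half (c c' : V) {r : ℝ} (hr : 0 ≤ r) :
    8 ^ finrank ℝ V * (μ (closedBall c r) * μ (closedBall c' (r / 2))) =
      ENNReal.ofReal (2 * r) ^ (2 * finrank ℝ V) * μ (ball 0 1) ^ 2 := by
  have hr2 : 0 ≤ r / 2 := by positivity
  have ofReal_r : ENNReal.ofReal r = 2 * ENNReal.ofReal (r / 2) := by
    rw [← ENNReal.ofReal_ofNat 2, ← ENNReal.ofReal_mul zero_le_two]
    ring_nf
  rw [Measure.addHaar_closedBall μ c hr, Measure.addHaar_closedBall μ c' hr2,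
    ENNReal.ofReal_pow hr, ENNReal.ofReal_pow hr2, ENNReal.ofReal_mul zero_le_two, ofReal_r,
    ENNReal.ofReal_ofNat, pow_mul]
  have : (8 : ℝ≥0∞) ^ finrank ℝ V * 2 ^ finrank ℝ V = (2 ^ 2 * 2 ^ 2) ^ finrank ℝ V := by
    rw [← mul_pow]; norm_num
  calc _ = 8 ^ finrank ℝ V * 2 ^ finrank ℝ V *
        ((ENNReal.ofReal (r / 2) ^ 2) ^ finrank ℝ V * μ (ball 0 1) ^ 2) := by ring
    _ = _ := by rw [this]; ring

variable [NormedSpace ℝ E] [CompleteSpace E]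

lemma edist_average_closedBall_rpow_mul_le {X : Type*} [PseudoMetricSpace X] [ProperSpace X]
    [MeasurableSpace X] [OpensMeasurableSpace X] {μ : Measure X} [IsFiniteMeasureOnCompacts μ]
    {u : X → E} {S : Set X} (hq : 1 ≤ q) (hu : AEStronglyMeasurable u μ) {c c' : X} {r r' : ℝ}
    (hS_ball : closedBall c r ⊆ S) (h_ball : closedBall c' r' ⊆ closedBall c r) :
    edist (⨍ x in closedBall c r, u x ∂μ) (⨍ x in closedBall c' r', u x ∂μ) ^ q *
        (μ (closedBall c r) * μ (closedBall c' r')) ≤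
      nonlocalEnergy (μ.restrict S) q ((Iic (ENNReal.ofReal (2 * r))).indicator 1) u := by
  have (c : X) (r : ℝ) : IsFiniteMeasure (μ.restrict (closedBall c r)) :=
    isFiniteMeasure_restrict.2 measure_closedBall_lt_top.ne
  calc _ ≤ ∫⁻ x in closedBall c r, ∫⁻ y in closedBall c' r', edist (u x) (u y) ^ q ∂μ ∂μ := by
        simpa only [Measure.restrict_apply_univ] using
          edist_average_average_rpow_mul_le (μ := μ.restrict (closedBall c r))
            (ν := μ.restrict (closedBall c' r')) hq hu.restrict hu.restrict
    _ ≤ _ := lintegral_lintegral_le_indicator_Iic measurableSet_closedBall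
        measurableSet_closedBall hS_ball (h_ball.trans hS_ball)
        fun x hx y hy => edist_le_ofReal_two_mul hx (h_ball hy)

lemma edist_average_closedBall_half_rpow_le {S : Set V} (hS : Convex ℝ S)
    (hSm : MeasurableSet S) (hq : 1 ≤ q) (hs : 0 < s) (hu : StronglyMeasurable u)
    (hfin : nonlocalEnergy (μ.restrict S) q (· ^ (-(2 * finrank ℝ V + s))) u ≠ ⊤)
    {c c' : V} {r : ℝ} (hr : 0 < r) (hS_ball : closedBall c r ⊆ S)
    (h_ball : closedBall c' (r / 2) ⊆ closedBall c r) :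
    edist (⨍ x in closedBall c r, u x ∂μ) (⨍ x in closedBall c' (r / 2), u x ∂μ) ^ q ≤
      8 ^ finrank ℝ V / (μ (ball 0 1) ^ 2 * (1 - 2 ^ (-s))) *
        ((1 - 2 ^ (s + finrank ℝ V - q)) *
          nonlocalEnergy (μ.restrict S) q (· ^ (-(2 * finrank ℝ V + s))) u) *
            ENNReal.ofReal (2 * r) ^ s := by
  set ρ := ENNReal.ofReal (2 * r) with hρ_def
  set D := (1 - 2 ^ (s + finrank ℝ V - q)) *
    nonlocalEnergy (μ.restrict S) q (· ^ (-(2 * finrank ℝ V + s))) u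
  set osc := edist (⨍ x in closedBall c r, u x ∂μ) (⨍ x in closedBall c' (r / 2), u x ∂μ) ^ q
  have hρ : ρ ≠ 0 := by simpa [hρ_def] using hr
  have osc_le : osc * (μ (closedBall c r) * μ (closedBall c' (r / 2))) ≤
      nonlocalEnergy (μ.restrict S) q ((Iic ρ).indicator 1) u :=
    edist_average_closedBall_rpow_mul_le hq hu.aestronglyMeasurable hS_ball h_ball
  have near_le := one_sub_mul_indicator_Iic_le_pow_mul_rpow hS hSm hq hs.le hu hfin hρ
    ENNReal.ofReal_ne_top
  have cleared : osc * (μ (ball 0 1) ^ 2 * (1 - 2 ^ (-s))) ≤ 8 ^ finrank ℝ V * (D * ρ ^ s) := by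
    refine (ENNReal.mul_le_mul_iff_right (pow_ne_zero (2 * finrank ℝ V) hρ) (by finiteness)).1 ?_
    calc ρ ^ (2 * finrank ℝ V) * (osc * (μ (ball 0 1) ^ 2 * (1 - 2 ^ (-s))))
        = ρ ^ (2 * finrank ℝ V) * μ (ball 0 1) ^ 2 * (osc * (1 - 2 ^ (-s))) := by ring
      _ = 8 ^ finrank ℝ V * ((1 - 2 ^ (-s)) *
            (osc * (μ (closedBall c r) * μ (closedBall c' (r / 2))))) := by
          rw [← addHaar_closedBall_mul_closedBall_half μ c c' hr.le]
          ring
      _ ≤ 8 ^ finrank ℝ V * (ρ ^ (2 * finrank ℝ V) * (ρ ^ s * D)) := by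
          gcongr 8 ^ finrank ℝ V * ?_
          exact (mul_le_mul_right osc_le _).trans near_le
      _ = _ := by ring
  have hs_gap := one_sub_two_rpow_neg_ne_zero hs
  have h_ball_zero : μ (ball 0 1) ≠ 0 := (measure_ball_pos μ 0 one_pos).ne'
  have h_ball_top : μ (ball 0 1) ≠ ⊤ := measure_ball_lt_top.ne
  rw [mul_assoc, ← ENNReal.mul_div_right_comm, ENNReal.le_div_iff_mul_le]
  · exact cleared
  · left; simp [hs_gap, h_ball_zero]
  · left; finiteness

lemma ofReal_two_mul_half_pow_mul_rpow (hq : q ≠ 0) (R s : ℝ) (k : ℕ) :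
    ENNReal.ofReal (2 * ((1 / 2) ^ k * R)) ^ s =
      ENNReal.ofReal (2 * R) ^ s * ((2 ^ (-(s / q))) ^ k) ^ q := by
  have scale : ENNReal.ofReal (2 * ((1 / 2) ^ k * R)) = 2⁻¹ ^ k * ENNReal.ofReal (2 * R) := by
    rw [mul_left_comm, ENNReal.ofReal_mul (by positivity), ENNReal.ofReal_pow (by positivity),
      one_div, ENNReal.ofReal_inv_of_pos two_pos, ENNReal.ofReal_ofNat]
  rw [scale, ENNReal.mul_rpow_of_ne_top (by finiteness) (by finiteness), mul_comm,
    ← ENNReal.rpow_neg_one]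
  simp only [← ENNReal.rpow_natCast, ← ENNReal.rpow_mul]
  congr 2
  field_simp

theorem ae_edist_average_rpow_le_of_average_closedBall_half {c : V} {R : ℝ} (hR : 0 < R)
    (hq : 0 < q) (hu : IntegrableOn u (closedBall c R) μ) {A : ℝ≥0∞}
    (hA : ∀ c₁ c₂ : V, ∀ r > 0, closedBall c₁ r ⊆ closedBall c R →
      closedBall c₂ (r / 2) ⊆ closedBall c₁ r →
      edist (⨍ y in closedBall c₁ r, u y ∂μ) (⨍ y in closedBall c₂ (r / 2), u y ∂μ) ^ q ≤
        A * ENNReal.ofReal (2 * r) ^ s) :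
    ∀ᵐ x ∂μ.restrict (closedBall c R), edist (⨍ y in closedBall c R, u y ∂μ) (u x) ^ q ≤
      A * ENNReal.ofReal (2 * R) ^ s / (1 - 2 ^ (-(s / q))) ^ q := by
  filter_upwards [ae_tendsto_average_halvedBall hR hu, ae_restrict_mem measurableSet_closedBall]
    with x hlim hx
  have geometric (k : ℕ) : edist (⨍ y in halvedBall c x R k, u y ∂μ)
      (⨍ y in halvedBall c x R (k + 1), u y ∂μ) ≤
      (A * ENNReal.ofReal (2 * R) ^ s) ^ q⁻¹ * (2 ^ (-(s / q))) ^ k := by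
    have half_radius : (1 / 2) ^ (k + 1) * R = (1 / 2) ^ k * R / 2 := by ring
    have h_succ := halvedBall_antitone hx k.le_succ
    have h_zero := halvedBall_antitone hx k.zero_le
    rw [halvedBall_zero] at h_zero
    simp only [halvedBall, half_radius, Nat.succ_eq_add_one] at h_succ h_zero ⊢
    rw [← ENNReal.rpow_le_rpow_iff hq, ENNReal.mul_rpow_of_nonneg _ _ hq.le,
      ENNReal.rpow_inv_rpow hq.ne', mul_assoc, ← ofReal_two_mul_half_pow_mul_rpow hq.ne']
    exact hA _ _ _ (by positivity) h_zero h_succ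
  have limit_le := edist_le_of_edist_le_geometric_of_tendsto₀ _ _ geometric hlim
  rw [halvedBall_zero] at limit_le
  calc edist (⨍ y in closedBall c R, u y ∂μ) (u x) ^ q
      ≤ ((A * ENNReal.ofReal (2 * R) ^ s) ^ q⁻¹ / (1 - 2 ^ (-(s / q)))) ^ q := by gcongr
    _ = A * ENNReal.ofReal (2 * R) ^ s / (1 - 2 ^ (-(s / q))) ^ q := by
      rw [ENNReal.div_rpow_of_nonneg _ _ hq.le, ENNReal.rpow_inv_rpow hq.ne']

lemma edist_rpow_le_two_rpow_mul {X : Type*} [PseudoEMetricSpace X] (hq : 0 < q) {a x y : X}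
    {T : ℝ≥0∞} (hx : edist a x ^ q ≤ T) (hy : edist a y ^ q ≤ T) :
    edist x y ^ q ≤ 2 ^ q * T := by
  calc edist x y ^ q ≤ (edist a x + edist a y) ^ q := by
        gcongr
        exact edist_triangle_left _ _ _
    _ ≤ (T ^ q⁻¹ + T ^ q⁻¹) ^ q := by
        gcongr <;> rwa [ENNReal.le_rpow_inv_iff hq]
    _ = 2 ^ q * T := by
        rw [← two_mul, ENNReal.mul_rpow_of_nonneg _ _ hq.le, ENNReal.rpow_inv_rpow hq.ne']

end Oscillation

section OscillationConst

variable {V : Type*} [NormedAddCommGroup V] [NormedSpace ℝ V] [MeasurableSpace V]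
  {μ : Measure V} {q s : ℝ}

variable (μ) in
/-- The constant of the oscillation bound for the exponent `q` and the order `s`. The factor
`8 ^ d / μ (ball 0 1) ^ 2` normalizes the volumes of two consecutive halved balls, `1 - 2 ^ (-s)`
comes from the gain at a single scale, `1 - 2 ^ (-(s / q))` from summing the geometric series over
all scales, and `2 ^ q` from comparing two points with the same average. It stays bounded as `s`
approaches `q - d`. -/
noncomputable def oscillationConst (q s : ℝ) : ℝ≥0∞ :=
  2 ^ q * (8 ^ finrank ℝ V / (μ (ball 0 1) ^ 2 * (1 - 2 ^ (-s))) / (1 - 2 ^ (-(s / q))) ^ q)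

lemma oscillationConst_antitone (hq : 0 ≤ q) : Antitone (oscillationConst μ q) := by
  intro s t hst
  have exponent : -(t / q) ≤ -(s / q) := by gcongr
  unfold oscillationConst
  gcongr
  all_goals exact one_le_two

variable [μ.IsAddHaarMeasure]

lemma oscillationConst_ne_top (hq : 0 < q) (hs : 0 < s) : oscillationConst μ q s ≠ ⊤ := by
  have h_ball : μ (ball (0 : V) 1) ^ 2 * (1 - 2 ^ (-s)) ≠ 0 :=
    mul_ne_zero (pow_ne_zero 2 (measure_ball_pos μ 0 one_pos).ne')
      (one_sub_two_rpow_neg_ne_zero hs)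
  have h_ratio : (1 - 2 ^ (-(s / q)) : ℝ≥0∞) ^ q ≠ 0 := by
    simpa only [ne_eq, ENNReal.rpow_eq_zero_iff_of_pos hq] using
      one_sub_two_rpow_neg_ne_zero (div_pos hs hq)
  unfold oscillationConst
  finiteness

variable [FiniteDimensional ℝ V]

lemma oscillationConst_ne_zero (hq : 0 ≤ q) : oscillationConst μ q s ≠ 0 := by
  have h_ball : μ (ball (0 : V) 1) ≠ ⊤ := measure_ball_lt_top.ne
  refine mul_ne_zero (by simp) (ENNReal.div_ne_zero.2 ⟨ENNReal.div_ne_zero.2 ⟨by simp, ?_⟩, ?_⟩) <;>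
    finiteness

end OscillationConst

section Main

variable {V E : Type*} [NormedAddCommGroup V] [NormedSpace ℝ V] [FiniteDimensional ℝ V]
  [MeasurableSpace V] [BorelSpace V] [NormedAddCommGroup E] [NormedSpace ℝ E] [CompleteSpace E]

theorem ae_edist_rpow_le_oscillationConst_mul {μ : Measure V} [μ.IsAddHaarMeasure] {q s : ℝ}
    {u : V → E} {c : V} {R : ℝ} (hR : 0 < R) (hq : 1 ≤ q) (hs : 0 < s) (hu : StronglyMeasurable u)
    (hfin : nonlocalEnergy (μ.restrict (closedBall c R)) q
      (· ^ (-(2 * finrank ℝ V + s))) u ≠ ⊤) :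
    ∀ᵐ z ∂(μ.restrict (closedBall c R)).prod (μ.restrict (closedBall c R)),
      edist (u z.1) (u z.2) ^ q ≤ oscillationConst μ q s * ENNReal.ofReal (2 * R) ^ s *
        ((1 - 2 ^ (s + finrank ℝ V - q)) * nonlocalEnergy (μ.restrict (closedBall c R)) q
          (· ^ (-(2 * finrank ℝ V + s))) u) := by
  set B := closedBall c R
  set D := (1 - 2 ^ (s + finrank ℝ V - q)) *
    nonlocalEnergy (μ.restrict B) q (· ^ (-(2 * finrank ℝ V + s))) u
  have hq_pos : 0 < q := zero_lt_one.trans_le hq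
  have hu_int : IntegrableOn u B μ :=
    integrableOn_closedBall_of_nonlocalEnergy_ne_top hR hq (by positivity) hu hfin
  have near_average : ∀ᵐ x ∂μ.restrict B, edist (⨍ y in B, u y ∂μ) (u x) ^ q ≤ _ :=
    ae_edist_average_rpow_le_of_average_closedBall_half hR hq_pos hu_int
      fun _ _ _ hr h_ball h_half => edist_average_closedBall_half_rpow_le
        (convex_closedBall c R) measurableSet_closedBall hq hs hu hfin hr h_ball h_half
  filter_upwards [Measure.quasiMeasurePreserving_fst.ae near_average,
    Measure.quasiMeasurePreserving_snd.ae near_average] with z h_fst h_snd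
  refine (edist_rpow_le_two_rpow_mul hq_pos h_fst h_snd).trans_eq ?_
  simp only [oscillationConst, div_eq_mul_inv]
  ring

/-- The integral is the `q`-th power of the Gagliardo seminorm of order `(d + s) / q` and exponent
`q` in dimension `d`, so `s > 0` is the supercritical range and `s → q - d` is the limit where the
order tends to `1`. -/
theorem stmt_0_general (μ : Measure V) [μ.IsAddHaarMeasure] {q s₀ : ℝ} (hq : 1 ≤ q)
    (hs₀ : 0 < s₀) :
    ∃ C > (0 : ℝ), ∀ s ∈ Ico s₀ (q - finrank ℝ V), ∀ c : V, ∀ R > (0 : ℝ),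
      ∀ u : V → E, StronglyMeasurable u →
      (∫⁻ x in closedBall c R, ∫⁻ y in closedBall c R,
          ENNReal.ofReal (‖u x - u y‖ ^ q / ‖x - y‖ ^ (2 * finrank ℝ V + s)) ∂μ ∂μ) < ⊤ →
      (essSup (fun z : V × V => ‖u z.1 - u z.2‖)
          ((μ.restrict (closedBall c R)).prod (μ.restrict (closedBall c R)))) ^ q
        ≤ C * (2 * R) ^ s * (q - finrank ℝ V - s) *
          (∫⁻ x in closedBall c R, ∫⁻ y in closedBall c R,
            ENNReal.ofReal (‖u x - u y‖ ^ q / ‖x - y‖ ^ (2 * finrank ℝ V + s)) ∂μ ∂μ).toReal := by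
  have hq_pos : 0 < q := zero_lt_one.trans_le hq
  have const_ne_top := oscillationConst_ne_top (μ := μ) hq_pos hs₀
  refine ⟨(oscillationConst μ q s₀).toReal,
    ENNReal.toReal_pos (oscillationConst_ne_zero hq_pos.le) const_ne_top, ?_⟩
  rintro s ⟨hs, s_lt⟩ c R hR u hu hfin
  rw [nonlocalEnergy.lintegral_ofReal_norm_sub_rpow_div _ hq_pos] at hfin ⊢
  set B := closedBall c R
  set energy := nonlocalEnergy (μ.restrict B) q (· ^ (-(2 * finrank ℝ V + s))) u
  have : NeZero ((μ.restrict B).prod (μ.restrict B)) := by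
    refine ⟨fun h => (measure_closedBall_pos μ c hR).ne' ?_⟩
    simpa [Measure.prod_apply] using congrArg (· univ) h
  refine essSup_rpow_le_of_ae_rpow_le (fun _ => norm_nonneg _) hq_pos ?_
  filter_upwards [ae_edist_rpow_le_oscillationConst_mul hR hq (hs₀.trans_le hs) hu hfin.ne]
    with z hz
  have gap_le : 1 - (2 : ℝ≥0∞) ^ (s + finrank ℝ V - q) ≤ ENNReal.ofReal (q - finrank ℝ V - s) := by
    simpa only [neg_sub, sub_sub_eq_add_sub, add_sub_assoc] using
      one_sub_two_rpow_neg_le (q - finrank ℝ V - s)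
  have uniform : edist (u z.1) (u z.2) ^ q ≤ oscillationConst μ q s₀ * ENNReal.ofReal (2 * R) ^ s *
      (ENNReal.ofReal (q - finrank ℝ V - s) * energy) := by
    refine hz.trans ?_
    gcongr
    exact oscillationConst_antitone hq_pos.le hs
  simpa [edist_eq_enorm_sub, ENNReal.toReal_mul, ← ENNReal.toReal_rpow, hR.le,
    (sub_pos.2 s_lt).le, mul_assoc] using ENNReal.toReal_mono (by finiteness) uniform

end Main

/-- Fractional Sobolev embedding in dimension one: for every s₀ ∈ (0,1) there is a
constant C = C(s₀) > 0 such that for every s ∈ [s₀,1), every interval (a,b) and every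
measurable u : (a,b) → ℝ² with finite Gagliardo H^{(1+s)/2}-seminorm,
osc(u,(a,b))² ≤ C (b-a)^s (1-s) [u]²_{H^{(1+s)/2}((a,b))}. -/
theorem stmt_0 :
    ∀ s₀ ∈ Ioo (0 : ℝ) 1, ∃ C > (0 : ℝ), ∀ s ∈ Ico s₀ 1, ∀ a b : ℝ, a < b →
      ∀ u : ℝ → EuclideanSpace ℝ (Fin 2), Measurable u →
      (∫⁻ x in Ioo a b, ∫⁻ y in Ioo a b,
          ENNReal.ofReal (‖u x - u y‖ ^ 2 / |x - y| ^ (2 + s))) < ⊤ →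
      (essSup (fun p : ℝ × ℝ => ‖u p.1 - u p.2‖)
          ((volume.restrict (Ioo a b)).prod (volume.restrict (Ioo a b)))) ^ 2
        ≤ C * (b - a) ^ s * (1 - s) *
          (∫⁻ x in Ioo a b, ∫⁻ y in Ioo a b,
            ENNReal.ofReal (‖u x - u y‖ ^ 2 / |x - y| ^ (2 + s))).toReal := by
  intro s₀ hs₀
  obtain ⟨C, hC, embedding⟩ := stmt_0_general (E := EuclideanSpace ℝ (Fin 2))
    (volume : Measure ℝ) one_le_two hs₀.1
  refine ⟨C, hC, fun s hs a b hab u hu hfin => ?_⟩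
  have two_sub_one : (2 : ℝ) - 1 = 1 := by norm_num
  have on_ball := embedding s (by simpa [two_sub_one] using hs) ((a + b) / 2) ((b - a) / 2)
    (half_pos (sub_pos.2 hab)) u hu.stronglyMeasurable
  simp only [← Real.Icc_eq_closedBall, ← Measure.restrict_congr_set Ioo_ae_eq_Icc, finrank_self,
    Nat.cast_one, mul_one, two_sub_one, mul_div_cancel₀ _ (two_ne_zero (α := ℝ)), Real.rpow_two,
    Real.norm_eq_abs] at on_ball
  exact on_ball hfin
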